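/- Let C₁ and C₂ be real symmetric N×N matrices, and let λ₁(C_i), …, λ_N(C_i) denote the eigenvalues of C_i ordered with non-decreasing absolute value. If C₂ has at most d non-zero eigenvalues and λ₁(C₁) ≠ 0, then |det(C₁ + C₂)| ≤ |det(C₁)| · (1 + |λ_N(C₂)| / |λ₁(C₁)|)^d. -/

import Mathlib

/-! If `C₁` is invertible then `C₁ + C₂ = C₁ (1 + C₁⁻¹ C₂)`, so everything rests on bounding
`det (1 + T)` for an operator `T` of small rank. By the Weinstein–Aronszajn identity this is the
determinant of `1 + T` on the range of `T` only, hence up to a phase a product of `rank T` singular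
values, each at most `1 + ‖T‖`. The spectral theorem turns the operator norms of `C₂` and `C₁⁻¹`
into extremal absolute values of eigenvalues. -/

open Module

theorem det_one_add_comp_comm {R M N : Type*} [CommRing R]
    [AddCommGroup M] [Module R M] [Module.Free R M] [Module.Finite R M]
    [AddCommGroup N] [Module R N] [Module.Free R N] [Module.Finite R N]
    (f : N →ₗ[R] M) (g : M →ₗ[R] N) :
    (1 + f ∘ₗ g).det = (1 + g ∘ₗ f).det := by
  classical
  let b := Free.chooseBasis R M
  let c := Free.chooseBasis R N
  rw [← LinearMap.det_toMatrix b, ← LinearMap.det_toMatrix c, map_add, map_add,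
    LinearMap.toMatrix_one, LinearMap.toMatrix_one, LinearMap.toMatrix_comp b c b,
    LinearMap.toMatrix_comp c b c, Matrix.det_one_add_mul_comm]

section InnerProductSpace

variable {𝕜 E F : Type*} [RCLike 𝕜]
  [NormedAddCommGroup E] [InnerProductSpace 𝕜 E] [FiniteDimensional 𝕜 E]
  [NormedAddCommGroup F] [InnerProductSpace 𝕜 F] [FiniteDimensional 𝕜 F]

theorem singularValues_le_opNorm (T : E →L[𝕜] F) (i : ℕ) :
    (T : E →ₗ[𝕜] F).singularValues i ≤ ‖T‖ := by
  set σ := (T : E →ₗ[𝕜] F).singularValues i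
  obtain hi | hi := le_or_gt (finrank 𝕜 E) i
  · exact (LinearMap.singularValues_of_finrank_le _ hi).trans_le (norm_nonneg T)
  obtain ⟨v, hv⟩ :=
    (LinearMap.hasEigenvalue_adjoint_comp_self_sq_singularValues (T : E →ₗ[𝕜] F) hi
      ).exists_hasEigenvector
  have norm_apply : ‖T v‖ = σ * ‖v‖ := by
    have inner_apply : inner 𝕜 (T v) (T v) = (σ : 𝕜) ^ 2 * inner 𝕜 v v := by
      have := congrArg (inner 𝕜 v) hv.apply_eq_smul
      rwa [LinearMap.comp_apply, LinearMap.adjoint_inner_right, inner_smul_right] at this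
    rw [inner_self_eq_norm_sq_to_K, inner_self_eq_norm_sq_to_K, ← mul_pow] at inner_apply
    rw [← sq_eq_sq₀ (norm_nonneg _)
      (mul_nonneg (LinearMap.singularValues_nonneg _ i) (norm_nonneg v))]
    exact_mod_cast inner_apply
  have norm_pos : 0 < ‖v‖ := norm_pos_iff.2 hv.2
  exact le_of_mul_le_mul_right (norm_apply ▸ T.le_opNorm v) norm_pos

theorem normDet_le_opNorm_pow_finrank (T : E →L[𝕜] F) :
    (T : E →ₗ[𝕜] F).normDet ≤ ‖T‖ ^ finrank 𝕜 E := by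
  rw [LinearMap.normDet_eq_prod_singularValues]
  calc ∏ i ∈ Finset.range (finrank 𝕜 E), (T : E →ₗ[𝕜] F).singularValues i
      ≤ ∏ _i ∈ Finset.range (finrank 𝕜 E), ‖T‖ :=
        Finset.prod_le_prod (fun i _ => LinearMap.singularValues_nonneg _ i)
          fun i _ => singularValues_le_opNorm T i
    _ = ‖T‖ ^ finrank 𝕜 E := by rw [Finset.prod_const, Finset.card_range]

theorem norm_det_one_add_le_pow_finrank_range (T : E →L[𝕜] E) :
    ‖(1 + (T : E →ₗ[𝕜] E)).det‖ ≤ (1 + ‖T‖) ^ finrank 𝕜 (T : E →ₗ[𝕜] E).range := by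
  set W := (T : E →ₗ[𝕜] E).range
  let toRange : E →L[𝕜] W := T.codRestrict W fun x => LinearMap.mem_range_self _ x
  let onRange : W →L[𝕜] W := toRange ∘L W.subtypeL
  have norm_onRange_le : ‖onRange‖ ≤ ‖T‖ :=
    onRange.opNorm_le_bound (norm_nonneg T) fun x => T.le_opNorm x
  have norm_one_add_le : ‖1 + onRange‖ ≤ 1 + ‖T‖ :=
    (norm_add_le _ _).trans (add_le_add ContinuousLinearMap.norm_id_le norm_onRange_le)
  calc ‖(1 + (T : E →ₗ[𝕜] E)).det‖
      = ‖((1 + onRange : W →L[𝕜] W) : W →ₗ[𝕜] W).det‖ :=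
        congrArg norm (det_one_add_comp_comm W.subtype (toRange : E →ₗ[𝕜] W))
    _ = ((1 + onRange : W →L[𝕜] W) : W →ₗ[𝕜] W).normDet :=
        (LinearMap.normDet_eq_norm_det _).symm
    _ ≤ ‖1 + onRange‖ ^ finrank 𝕜 W := normDet_le_opNorm_pow_finrank _
    _ ≤ (1 + ‖T‖) ^ finrank 𝕜 W := by gcongr

end InnerProductSpace

theorem ne_zero_of_iInf_abs_pos {ι : Type*} [Finite ι] {f : ι → ℝ} (h : 0 < ⨅ i, |f i|)
    (i : ι) : f i ≠ 0 :=
  abs_pos.1 (h.trans_le (ciInf_le (Set.finite_range _).bddBelow i))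

section Matrix

open scoped Matrix.Norms.L2Operator

variable {𝕜 n : Type*} [RCLike 𝕜] [Fintype n] [DecidableEq n]

theorem norm_det_one_add_le_pow_rank (A : Matrix n n 𝕜) :
    ‖(1 + A).det‖ ≤ (1 + ‖A‖) ^ A.rank := by
  have det_eq : (1 + A.toLpLin 2 2).det = (1 + A).det := by
    rw [← LinearMap.det_toLpLin 2 (1 + A), map_add (Matrix.toLpLin 2 2), Matrix.toLpLin_one,
      Module.End.one_eq_id]
  have rank_eq : finrank 𝕜 (A.toLpLin 2 2).range = A.rank := by
    rw [Matrix.toLpLin_eq_toLin, ← Matrix.rank_eq_finrank_range_toLin]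
  rw [← det_eq, ← rank_eq]
  exact norm_det_one_add_le_pow_finrank_range (Matrix.toEuclideanCLM (n := n) (𝕜 := 𝕜) A)

theorem norm_det_add_le {A : Matrix n n 𝕜} (hA : IsUnit A.det) (B : Matrix n n 𝕜) :
    ‖(A + B).det‖ ≤ ‖A.det‖ * (1 + ‖A⁻¹‖ * ‖B‖) ^ B.rank := by
  have rank_eq : (A⁻¹ * B).rank = B.rank :=
    Matrix.rank_mul_eq_right_of_isUnit_det _ _ (Matrix.isUnit_nonsing_inv_det A hA)
  calc ‖(A + B).det‖
      = ‖(A * (1 + A⁻¹ * B)).det‖ := by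
        rw [mul_add, mul_one, Matrix.mul_nonsing_inv_cancel_left _ _ hA]
    _ = ‖A.det‖ * ‖(1 + A⁻¹ * B).det‖ := by rw [Matrix.det_mul, norm_mul]
    _ ≤ ‖A.det‖ * (1 + ‖A⁻¹ * B‖) ^ B.rank := by
        gcongr
        exact rank_eq ▸ norm_det_one_add_le_pow_rank _
    _ ≤ ‖A.det‖ * (1 + ‖A⁻¹‖ * ‖B‖) ^ B.rank := by
        gcongr
        exact norm_mul_le _ _

theorem l2_opNorm_conjStarAlgAut_diagonal (U : Matrix.unitaryGroup n 𝕜) (v : n → 𝕜) :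
    ‖Unitary.conjStarAlgAut 𝕜 _ U (Matrix.diagonal v)‖ = ‖v‖ := by
  rw [Unitary.conjStarAlgAut_apply, ← Unitary.coe_star, CStarRing.norm_mul_coe_unitary,
    CStarRing.norm_coe_unitary_mul, Matrix.l2_opNorm_diagonal]

theorem l2_opNorm_le_iSup_abs_eigenvalues {A : Matrix n n 𝕜} (hA : A.IsHermitian) :
    ‖A‖ ≤ ⨆ j, |hA.eigenvalues j| := by
  conv_lhs => rw [hA.spectral_theorem]
  rw [l2_opNorm_conjStarAlgAut_diagonal,
    pi_norm_le_iff_of_nonneg (Real.iSup_nonneg fun _ => abs_nonneg _)]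
  intro j
  rw [Function.comp_apply, RCLike.norm_ofReal]
  exact le_ciSup (f := fun j => |hA.eigenvalues j|) (Set.finite_range _).bddAbove j

theorem isUnit_det_iff_forall_eigenvalues_ne_zero {A : Matrix n n 𝕜} (hA : A.IsHermitian) :
    IsUnit A.det ↔ ∀ j, hA.eigenvalues j ≠ 0 := by
  simp only [isUnit_iff_ne_zero, hA.det_eq_prod_eigenvalues, Finset.prod_ne_zero_iff,
    Finset.mem_univ, forall_const, ne_eq, RCLike.ofReal_eq_zero]

theorem inv_eq_conjStarAlgAut_diagonal_inv_eigenvalues {A : Matrix n n 𝕜} (hA : A.IsHermitian)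
    (h : ∀ j, hA.eigenvalues j ≠ 0) :
    A⁻¹ = Unitary.conjStarAlgAut 𝕜 _ hA.eigenvectorUnitary
      (Matrix.diagonal fun j => ((hA.eigenvalues j)⁻¹ : ℝ)) := by
  refine Matrix.inv_eq_right_inv ?_
  conv_lhs => enter [1]; rw [hA.spectral_theorem]
  rw [← map_mul, Matrix.diagonal_mul_diagonal, ← map_one (Unitary.conjStarAlgAut 𝕜 _ _),
    ← Matrix.diagonal_one]
  congr! 3 with j
  rw [Function.comp_apply, ← RCLike.ofReal_mul, mul_inv_cancel₀ (h j), RCLike.ofReal_one]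

theorem l2_opNorm_inv_le_inv_iInf_abs_eigenvalues {A : Matrix n n 𝕜} (hA : A.IsHermitian)
    (hpos : 0 < ⨅ j, |hA.eigenvalues j|) :
    ‖A⁻¹‖ ≤ (⨅ j, |hA.eigenvalues j|)⁻¹ := by
  rw [inv_eq_conjStarAlgAut_diagonal_inv_eigenvalues hA (ne_zero_of_iInf_abs_pos hpos),
    l2_opNorm_conjStarAlgAut_diagonal, pi_norm_le_iff_of_nonneg (inv_nonneg.2 hpos.le)]
  intro j
  rw [RCLike.norm_ofReal, abs_inv]
  exact inv_anti₀ hpos (ciInf_le (Set.finite_range _).bddBelow j)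

theorem stmt_3_general {C₁ C₂ : Matrix n n 𝕜} (h₁ : C₁.IsHermitian) (h₂ : C₂.IsHermitian)
    {d : ℕ} (hrank : ({j | h₂.eigenvalues j ≠ 0} : Finset n).card ≤ d)
    (hmin : (⨅ j, |h₁.eigenvalues j|) ≠ 0) :
    ‖(C₁ + C₂).det‖ ≤
      ‖C₁.det‖ * (1 + (⨆ j, |h₂.eigenvalues j|) / (⨅ j, |h₁.eigenvalues j|)) ^ d := by
  set m := ⨅ j, |h₁.eigenvalues j|
  set M := ⨆ j, |h₂.eigenvalues j|
  have hm : 0 < m := hmin.lt_of_le' (Real.iInf_nonneg fun _ => abs_nonneg _)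
  have hM : 0 ≤ M := Real.iSup_nonneg fun _ => abs_nonneg _
  have hdet : IsUnit C₁.det :=
    (isUnit_det_iff_forall_eigenvalues_ne_zero h₁).2 (ne_zero_of_iInf_abs_pos hm)
  have hrank' : C₂.rank ≤ d := by
    rwa [h₂.rank_eq_card_non_zero_eigs, Fintype.card_subtype]
  calc ‖(C₁ + C₂).det‖
      ≤ ‖C₁.det‖ * (1 + ‖C₁⁻¹‖ * ‖C₂‖) ^ C₂.rank := norm_det_add_le hdet C₂
    _ ≤ ‖C₁.det‖ * (1 + m⁻¹ * M) ^ C₂.rank := by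
        gcongr
        · exact l2_opNorm_inv_le_inv_iInf_abs_eigenvalues h₁ hm
        · exact l2_opNorm_le_iSup_abs_eigenvalues h₂
    _ ≤ ‖C₁.det‖ * (1 + m⁻¹ * M) ^ d := by
        gcongr
        exact le_add_of_nonneg_right (by positivity)
    _ = ‖C₁.det‖ * (1 + M / m) ^ d := by rw [div_eq_inv_mul]

end Matrix

/-- Let `C₁, C₂` be real symmetric `N×N` matrices. If `C₂` has at most `d` non-zero
eigenvalues and the smallest absolute value of an eigenvalue of `C₁` is non-zero, then
`|det(C₁ + C₂)| ≤ |det C₁| · (1 + λ_max|C₂| / λ_min|C₁|)^d`, where `λ_min|C₁|` is the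
minimal and `λ_max|C₂|` the maximal absolute value of an eigenvalue. -/
theorem stmt_3 (N d : ℕ) (hN : 0 < N)
    (C₁ C₂ : Matrix (Fin N) (Fin N) ℝ)
    (h₁ : C₁.IsHermitian) (h₂ : C₂.IsHermitian)
    (hrank : ({j | h₂.eigenvalues j ≠ 0} : Finset (Fin N)).card ≤ d)
    (hmin : (⨅ j, |h₁.eigenvalues j|) ≠ 0) :
    |(C₁ + C₂).det| ≤
      |C₁.det| * (1 + (⨆ j, |h₂.eigenvalues j|) / (⨅ j, |h₁.eigenvalues j|)) ^ d :=
  stmt_3_general h₁ h₂ hrank hmin
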